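/- When distortion is measured at the intermediate layer Y, the model-splitting approach and the direct coding approach have equal minimal rates: for every D > 0, R_XY(D;Y) = R_Y(D;Y). -/

import Mathlib

open scoped BigOperators

/-- Joint distribution P(a,b) = p(a)·k(a)(b) induced by a source `p` and a channel `k`,
as a real number. -/
noncomputable def jointP {A B : Type*} [Fintype A] [Fintype B] (p : PMF A) (k : A → PMF B)
    (a : A) (b : B) : ℝ :=
  (p a * k a b).toReal

/-- Marginal distribution of the second coordinate of the joint induced by `(p, k)`. -/
noncomputable def margSnd {A B : Type*} [Fintype A] [Fintype B] (p : PMF A) (k : A → PMF B)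
    (b : B) : ℝ :=
  ∑ a, jointP p k a b

/-- Mutual information I(A;B) = ∑_{a,b} P(a,b)·log(P(a,b)/(P(a)·P(b))) of the joint
induced by `(p, k)`; the convention 0·log 0 = 0 holds automatically in Lean. -/
noncomputable def mutualInfo {A B : Type*} [Fintype A] [Fintype B] (p : PMF A)
    (k : A → PMF B) : ℝ :=
  ∑ a, ∑ b, jointP p k a b * Real.log (jointP p k a b / ((p a).toReal * margSnd p k b))

/-- Expected distortion E[d(A,B)] under the joint induced by `(p, k)`. -/
noncomputable def expDist {A B : Type*} [Fintype A] [Fintype B] (p : PMF A) (k : A → PMF B)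
    (d : A → B → ℝ) : ℝ :=
  ∑ a, ∑ b, jointP p k a b * d a b

/-- Rate-distortion function: infimum of mutual information over all channels `A → PMF B`
meeting the expected-distortion constraint `≤ D`. -/
noncomputable def rate {A B : Type*} [Fintype A] [Fintype B] (p : PMF A) (d : A → B → ℝ)
    (D : ℝ) : ℝ :=
  sInf { r : ℝ | ∃ k : A → PMF B, expDist p k d ≤ D ∧ r = mutualInfo p k }

/-- Conditional probability P(A = a | B = b) under the joint induced by `(p, k)`. -/
noncomputable def condProb {A B : Type*} [Fintype A] [Fintype B] (p : PMF A) (k : A → PMF B)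
    (a : A) (b : B) : ℝ :=
  jointP p k a b / margSnd p k b

/-!
Both rates are infima over channels, and each channel of one problem is matched by a channel of the
other that has the same expected distortion and at most the same mutual information. A channel out
of `Y` is precomposed with `g`. A channel out of `X` is averaged over the fibers of `g`, with
weights `P(x ∣ y)`: the joint law of `(Y, Ŷ)`, hence the distortion, is unchanged, and by the
log-sum inequality on each fiber the mutual information does not increase.
-/

lemma sum_mul_log_sum_div_sum_le {ι : Type*} {s : Finset ι} {u v : ι → ℝ}
    (hu : ∀ i ∈ s, 0 ≤ u i) (hv : ∀ i ∈ s, 0 ≤ v i) (huv : ∀ i ∈ s, v i = 0 → u i = 0) :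
    (∑ i ∈ s, u i) * Real.log ((∑ i ∈ s, u i) / ∑ i ∈ s, v i) ≤
      ∑ i ∈ s, u i * Real.log (u i / v i) := by
  rcases (Finset.sum_nonneg hv).eq_or_lt with hV | hV
  · have hv_zero := (Finset.sum_eq_zero_iff_of_nonneg hv).1 hV.symm
    rw [Finset.sum_eq_zero fun i hi => huv i hi (hv_zero i hi), zero_mul]
    exact (Finset.sum_eq_zero fun i hi => by rw [huv i hi (hv_zero i hi), zero_mul]).ge
  · have hcancel : ∀ i ∈ s, v i * (u i / v i) = u i := fun i hi =>
      mul_div_cancel_of_imp' (huv i hi)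
    have jensen := Real.convexOn_mul_log.map_centerMass_le (p := fun i => u i / v i) hv hV
      fun i hi => Set.mem_Ici.2 (div_nonneg (hu i hi) (hv i hi))
    simp only [Finset.centerMass, smul_eq_mul, Function.comp_apply, ← mul_assoc] at jensen
    have hcancel_log : ∑ i ∈ s, v i * (u i / v i) * Real.log (u i / v i) =
        ∑ i ∈ s, u i * Real.log (u i / v i) :=
      Finset.sum_congr rfl fun i hi => by rw [hcancel i hi]
    rw [Finset.sum_congr rfl hcancel, hcancel_log, mul_assoc] at jensen
    rw [div_eq_inv_mul]
    exact le_of_mul_le_mul_left jensen (inv_pos.2 hV)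

section PushforwardPMF

variable {A C : Type*}

lemma pmf_map_apply_eq_tsum_indicator (p : PMF A) (g : A → C) (c : C) :
    p.map g c = ∑' a, (g ⁻¹' {c}).indicator p a := by
  rw [← PMF.toOuterMeasure_apply, ← PMF.toOuterMeasure_map_apply,
    PMF.toOuterMeasure_apply_singleton]

lemma toReal_pmf_map_apply [Fintype A] [DecidableEq C] (p : PMF A) (g : A → C) (c : C) :
    (p.map g c).toReal = ∑ a with g a = c, (p a).toReal := by
  rw [pmf_map_apply_eq_tsum_indicator, tsum_fintype,
    ← ENNReal.toReal_sum fun a _ => p.apply_ne_top a, Finset.sum_filter]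
  congr! 2 with a
  by_cases ha : g a = c <;> simp [ha]

/-- `r` is the conditional law given `g = c`, and arbitrary where that event is null. -/
lemma exists_pmf_map_apply_mul_eq_indicator (p : PMF A) (g : A → C) (c : C) :
    ∃ r : PMF A, ∀ a, p.map g c * r a = (g ⁻¹' {c}).indicator p a := by
  by_cases h : ∃ a ∈ g ⁻¹' {c}, a ∈ p.support
  · have hc : p.map g c ≠ 0 := by
      obtain ⟨a, ha, hap⟩ := h
      exact (PMF.mem_support_map_iff g p c).2 ⟨a, hap, ha⟩
    refine ⟨p.filter _ h, fun a => ?_⟩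
    rw [PMF.filter_apply, ← pmf_map_apply_eq_tsum_indicator, mul_left_comm,
      ENNReal.mul_inv_cancel hc (PMF.apply_ne_top _ _), mul_one]
  · have hzero : ∑' a, (g ⁻¹' {c}).indicator p a = 0 := by
      refine ENNReal.tsum_eq_zero.2 fun a => Set.indicator_apply_eq_zero.2 fun ha => ?_
      exact (PMF.apply_eq_zero_iff p a).2 fun hap => h ⟨a, ha, hap⟩
    refine ⟨p, fun a => ?_⟩
    rw [pmf_map_apply_eq_tsum_indicator, hzero, zero_mul, ENNReal.tsum_eq_zero.1 hzero a]

end PushforwardPMF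

section Channels

variable {A B C : Type*} [Fintype A] [Fintype B] [Fintype C]

lemma jointP_eq_mul (p : PMF A) (k : A → PMF B) (a : A) (b : B) :
    jointP p k a b = (p a).toReal * (k a b).toReal :=
  ENNReal.toReal_mul

lemma jointP_nonneg (p : PMF A) (k : A → PMF B) (a : A) (b : B) : 0 ≤ jointP p k a b :=
  ENNReal.toReal_nonneg

lemma margSnd_nonneg (p : PMF A) (k : A → PMF B) (b : B) : 0 ≤ margSnd p k b :=
  Finset.sum_nonneg fun a _ => jointP_nonneg p k a b

lemma jointP_eq_zero_of_mul_margSnd_eq_zero {p : PMF A} {k : A → PMF B} {a : A} {b : B}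
    (h : (p a).toReal * margSnd p k b = 0) : jointP p k a b = 0 := by
  rcases mul_eq_zero.1 h with hp | hm
  · rw [jointP_eq_mul, hp, zero_mul]
  · exact (Finset.sum_eq_zero_iff_of_nonneg fun a _ => jointP_nonneg p k a b).1 hm a
      (Finset.mem_univ a)

lemma mutualInfo_eq_sum_jointP_mul_log_div_margSnd (p : PMF A) (k : A → PMF B) :
    mutualInfo p k =
      ∑ a, ∑ b, jointP p k a b * Real.log ((k a b).toReal / margSnd p k b) := by
  refine Finset.sum_congr rfl fun a _ => Finset.sum_congr rfl fun b _ => ?_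
  rcases eq_or_ne (p a).toReal 0 with hp | hp
  · simp only [jointP_eq_mul, hp, zero_mul]
  · rw [jointP_eq_mul, mul_div_mul_left _ _ hp]

/-- `k'` is a channel from the feature `g(A)` to `B` induced by the channel `k` from `A` to `B`:
the joint law of `(g(A), B)` under `k` is the one of the source `p.map g` with the channel `k'`.
This is a relation because `k'` is only determined on the support of `p.map g`. -/
def IsInducedChannel [DecidableEq C] (p : PMF A) (g : A → C) (k : A → PMF B)
    (k' : C → PMF B) : Prop :=
  ∀ c b, jointP (p.map g) k' c b = ∑ a with g a = c, jointP p k a b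

lemma isInducedChannel_comp [DecidableEq C] (p : PMF A) (g : A → C) (k : C → PMF B) :
    IsInducedChannel p g (k ∘ g) k := by
  intro c b
  rw [jointP_eq_mul, toReal_pmf_map_apply, Finset.sum_mul]
  refine Finset.sum_congr rfl fun a ha => ?_
  rw [jointP_eq_mul, Function.comp_apply, (Finset.mem_filter.1 ha).2]

lemma exists_isInducedChannel [DecidableEq C] (p : PMF A) (g : A → C) (k : A → PMF B) :
    ∃ k' : C → PMF B, IsInducedChannel p g k k' := by
  choose r hr using exists_pmf_map_apply_mul_eq_indicator p g
  refine ⟨fun c => (r c).bind k, fun c b => ?_⟩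
  have hfiber : p.map g c * (r c).bind k b = ∑ a with g a = c, p a * k a b := by
    simp only [PMF.bind_apply, tsum_fintype, Finset.mul_sum, ← mul_assoc, hr, Finset.sum_filter]
    refine Finset.sum_congr rfl fun a _ => ?_
    by_cases ha : g a = c <;> simp [ha]
  rw [jointP, hfiber, ENNReal.toReal_sum fun a _ =>
    ENNReal.mul_ne_top (p.apply_ne_top a) ((k a).apply_ne_top b)]
  rfl

namespace IsInducedChannel

variable [DecidableEq C] {p : PMF A} {g : A → C} {k : A → PMF B} {k' : C → PMF B}

lemma margSnd_eq (h : IsInducedChannel p g k k') (b : B) :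
    margSnd (p.map g) k' b = margSnd p k b := by
  simp only [margSnd, h _ b]
  exact Finset.sum_fiberwise Finset.univ g fun a => jointP p k a b

lemma sum_jointP_mul (h : IsInducedChannel p g k k') (f : C → B → ℝ) :
    ∑ c, ∑ b, jointP (p.map g) k' c b * f c b = ∑ a, ∑ b, jointP p k a b * f (g a) b := by
  rw [← Finset.sum_fiberwise Finset.univ g]
  refine Finset.sum_congr rfl fun c _ => ?_
  rw [Finset.sum_comm]
  refine Finset.sum_congr rfl fun b _ => ?_
  rw [h c b, Finset.sum_mul]
  refine Finset.sum_congr rfl fun a ha => ?_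
  rw [(Finset.mem_filter.1 ha).2]

lemma expDist_eq (h : IsInducedChannel p g k k') (d : C → B → ℝ) :
    expDist (p.map g) k' d = expDist p k fun a b => d (g a) b :=
  h.sum_jointP_mul d

lemma mutualInfo_le (h : IsInducedChannel p g k k') :
    mutualInfo (p.map g) k' ≤ mutualInfo p k := by
  rw [mutualInfo, mutualInfo, ← Finset.sum_fiberwise Finset.univ g]
  refine Finset.sum_le_sum fun c _ => ?_
  rw [Finset.sum_comm]
  refine Finset.sum_le_sum fun b _ => ?_
  rw [h.margSnd_eq, h c b, toReal_pmf_map_apply,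
    Finset.sum_mul _ _ (margSnd p k b)]
  exact sum_mul_log_sum_div_sum_le (fun a _ => jointP_nonneg p k a b)
    (fun _ _ => mul_nonneg ENNReal.toReal_nonneg (margSnd_nonneg p k b))
    fun _ _ => jointP_eq_zero_of_mul_margSnd_eq_zero

end IsInducedChannel

lemma mutualInfo_comp (p : PMF A) (g : A → C) (k : C → PMF B) :
    mutualInfo p (k ∘ g) = mutualInfo (p.map g) k := by
  classical
  have h := isInducedChannel_comp p g k
  simp only [mutualInfo_eq_sum_jointP_mul_log_div_margSnd, h.sum_jointP_mul, h.margSnd_eq,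
    Function.comp_apply]

end Channels

theorem direct_eq_split_at_intermediate_general {A B C : Type*} [Fintype A] [Fintype B]
    [Fintype C] (p : PMF A) (g : A → C) (d : C → B → ℝ) (D : ℝ) :
    rate p (fun a b => d (g a) b) D = rate (p.map g) d D := by
  classical
  refine csInf_eq_csInf_of_forall_exists_le ?_ ?_
  · rintro _ ⟨k, hk, rfl⟩
    obtain ⟨k', hk'⟩ := exists_isInducedChannel p g k
    exact ⟨_, ⟨k', (hk'.expDist_eq d).trans_le hk, rfl⟩, hk'.mutualInfo_le⟩
  · rintro _ ⟨k, hk, rfl⟩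
    have hdist := (isInducedChannel_comp p g k).expDist_eq d
    exact ⟨_, ⟨k ∘ g, hdist.symm.trans_le hk, rfl⟩, (mutualInfo_comp p g k).le⟩

/-- With distortion measured at the intermediate layer Y = g(X), for every
D > 0, R_XY(D;Y) = R_Y(D;Y). -/
theorem direct_eq_split_at_intermediate
    {𝒳 𝒴 : Type*} [Fintype 𝒳] [Fintype 𝒴] [Nonempty 𝒳] [Nonempty 𝒴]
    (pX : PMF 𝒳) (g : 𝒳 → 𝒴)
    (dY : 𝒴 → 𝒴 → ℝ) (hdY : ∀ y y', 0 ≤ dY y y')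
    (D : ℝ) (hD : 0 < D) :
    rate pX (fun x yhat => dY (g x) yhat) D = rate (pX.map g) dY D :=
  direct_eq_split_at_intermediate_general pX g dY D
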